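/- Let 𝓡 be a ratio-covariety, let S ∈ 𝓡 with S ≠ ℕ, and let T be a numerical semigroup. Then T ∈ 𝓡, T ≠ min(𝓡) and T \ {r(T)} = S hold if and only if there exists x ∈ SG(S) with m(S) < x < r(S) such that T = S ∪ {x} and S ∪ {x} ∈ 𝓡. -/

import Mathlib

/-!
Adjoining to `S` an element `x` with `mult S < x < ratio S` does not change the multiplicity `m`.
A gap `x` of `S` is not a multiple of `m`, and every element of `S` not divisible by `m` is at least
`ratio S > x`, so `x` is exactly the ratio of `S ∪ {x}` and removing the ratio gives back `S`.
Such an `S ∪ {x}` is not the minimum of the family, since the minimum is contained in `S`.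

Conversely, if `T \ {ratio T} = S`, then `x = ratio T` is a nonzero element of `T` not divisible by
`mult T`; hence `mult T` survives in `S` and the two multiplicities agree. The elements `x + s` and
`2 * x` of `T` are different from `x`, so they lie in `S`, making `x` a special gap. Finally the
ratio of `S` is an element of `T` not divisible by `mult T` and different from `x`, so it exceeds
`x`.
-/


/-- A numerical semigroup: a submonoid of (ℕ,+) with finite complement. -/
def IsNumericalSemigroup (S : Set ℕ) : Prop :=
  0 ∈ S ∧ (∀ a ∈ S, ∀ b ∈ S, a + b ∈ S) ∧ Sᶜ.Finite

/-- The multiplicity m(S): least positive element of S. -/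
noncomputable def mult (S : Set ℕ) : ℕ := sInf {s | s ∈ S ∧ s ≠ 0}

/-- The ratio r(S): least s ∈ S not divisible by the multiplicity. -/
noncomputable def ratio (S : Set ℕ) : ℕ := sInf {s | s ∈ S ∧ ¬ mult S ∣ s}

/-- The Frobenius number F(S): largest integer not in S. -/
noncomputable def frob (S : Set ℕ) : ℕ := sSup Sᶜ

/-- The genus g(S): number of gaps of S. -/
noncomputable def genus (S : Set ℕ) : ℕ := Sᶜ.ncard

/-- Pseudo-Frobenius numbers of S. -/
def PF (S : Set ℕ) : Set ℕ := {x | x ∉ S ∧ ∀ s ∈ S, s ≠ 0 → x + s ∈ S}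

/-- Special gaps of S. -/
def SG (S : Set ℕ) : Set ℕ := {x | x ∈ PF S ∧ 2 * x ∈ S}

/-- The Apéry set of n in S: elements s of S with s - n ∉ S (as integers). -/
def Ap (S : Set ℕ) (n : ℕ) : Set ℕ := {s | s ∈ S ∧ ¬ ∃ t ∈ S, t + n = s}

/-- The minimal system of generators of a numerical semigroup:
    nonzero elements not expressible as a sum of two nonzero elements. -/
def msg (S : Set ℕ) : Set ℕ :=
  {x | x ∈ S ∧ x ≠ 0 ∧ ∀ a ∈ S, ∀ b ∈ S, a ≠ 0 → b ≠ 0 → x ≠ a + b}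

/-- The embedding dimension e(S). -/
noncomputable def edim (S : Set ℕ) : ℕ := (msg S).ncard

/-- The submonoid of ℕ generated by a set A. -/
def closureSet (A : Set ℕ) : Set ℕ := (AddSubmonoid.closure A : Set ℕ)

/-- M is the minimum of the family R with respect to inclusion. -/
def IsMinOf (R : Set (Set ℕ)) (M : Set ℕ) : Prop := M ∈ R ∧ ∀ S ∈ R, M ⊆ S

/-- A ratio-covariety. -/
def IsRatioCovariety (R : Set (Set ℕ)) : Prop :=
  R.Nonempty ∧ (∀ S ∈ R, IsNumericalSemigroup S) ∧
  (∃ M, IsMinOf R M) ∧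
  (∀ S ∈ R, ∀ T ∈ R, S ∩ T ∈ R) ∧
  (∀ S ∈ R, ∀ M, IsMinOf R M → S ≠ M → S \ {ratio S} ∈ R)

/-- The family 𝓡(F,m) of numerical semigroups with Frobenius number F and multiplicity m. -/
def RFm (F m : ℕ) : Set (Set ℕ) :=
  {S | IsNumericalSemigroup S ∧ frob S = F ∧ mult S = m}

/-- Δ(F,m) = ⟨m⟩ ∪ {F+1, →}. -/
def Delta (F m : ℕ) : Set ℕ := {n | m ∣ n} ∪ {n | F < n}

/-- X is an 𝓡-set: disjoint from min(𝓡) and contained in some element of 𝓡. -/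
def IsRSet (R : Set (Set ℕ)) (X : Set ℕ) : Prop :=
  (∀ M, IsMinOf R M → X ∩ M = ∅) ∧ ∃ S ∈ R, X ⊆ S

/-- 𝓡[X]: the intersection of all elements of 𝓡 containing X. -/
def RGen (R : Set (Set ℕ)) (X : Set ℕ) : Set ℕ := ⋂₀ {S | S ∈ R ∧ X ⊆ S}

/-- The 𝓡-rank of S. -/
noncomputable def Rrank (R : Set (Set ℕ)) (S : Set ℕ) : ℕ :=
  sInf {n | ∃ X, IsRSet R X ∧ RGen R X = S ∧ X.ncard = n}

theorem IsNumericalSemigroup.exists_bound {S : Set ℕ} (h : IsNumericalSemigroup S) :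
    ∃ N, ∀ n, N < n → n ∈ S := by
  obtain ⟨N, hN⟩ := h.2.2.bddAbove
  refine ⟨N, fun n hn => ?_⟩
  by_contra hc
  exact absurd (hN hc) (by omega)

theorem IsNumericalSemigroup.mult_spec {S : Set ℕ} (h : IsNumericalSemigroup S) :
    mult S ∈ S ∧ mult S ≠ 0 := by
  obtain ⟨N, hN⟩ := h.exists_bound
  exact Nat.sInf_mem (s := {s | s ∈ S ∧ s ≠ 0}) ⟨N + 1, hN _ (by omega), by omega⟩

theorem mult_le_of_mem {S : Set ℕ} {s : ℕ} (h : s ∈ S) (h0 : s ≠ 0) : mult S ≤ s :=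
  Nat.sInf_le (s := {s | s ∈ S ∧ s ≠ 0}) ⟨h, h0⟩

theorem ratio_le_of_mem {S : Set ℕ} {s : ℕ} (h : s ∈ S) (h0 : ¬ mult S ∣ s) : ratio S ≤ s :=
  Nat.sInf_le (s := {s | s ∈ S ∧ ¬ mult S ∣ s}) ⟨h, h0⟩

theorem ratio_spec {S : Set ℕ} {s : ℕ} (h : s ∈ S) (h0 : ¬ mult S ∣ s) :
    ratio S ∈ S ∧ ¬ mult S ∣ ratio S :=
  Nat.sInf_mem (s := {s | s ∈ S ∧ ¬ mult S ∣ s}) ⟨s, h, h0⟩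

/-- For `S = ℕ` no element qualifies and `ratio S` is the junk value `0`; a nonzero value is
therefore a genuine ratio. -/
theorem ratio_spec_of_ne_zero {S : Set ℕ} (h : ratio S ≠ 0) :
    ratio S ∈ S ∧ ¬ mult S ∣ ratio S :=
  Nat.sInf_mem (s := {s | s ∈ S ∧ ¬ mult S ∣ s}) (Nat.nonempty_of_pos_sInf (Nat.pos_of_ne_zero h))

theorem IsNumericalSemigroup.mem_of_mult_dvd {S : Set ℕ} (h : IsNumericalSemigroup S) {n : ℕ}
    (hn : mult S ∣ n) : n ∈ S := by
  obtain ⟨k, rfl⟩ := hn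
  induction k with
  | zero => exact h.1
  | succ k ih => exact h.2.1 _ ih _ h.mult_spec.1

theorem children_in_ratio_covariety (R : Set (Set ℕ)) (hR : IsRatioCovariety R)
    (S : Set ℕ) (hS : S ∈ R) (hSuniv : S ≠ Set.univ)
    (T : Set ℕ) (hT : IsNumericalSemigroup T) :
    (T ∈ R ∧ (∀ M, IsMinOf R M → T ≠ M) ∧ T \ {ratio T} = S) ↔
      ∃ x ∈ SG S, mult S < x ∧ x < ratio S ∧ T = S ∪ {x} ∧ S ∪ {x} ∈ R := by
  have hSn : IsNumericalSemigroup S := hR.2.1 S hS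
  obtain ⟨hmS, hmS0⟩ := hSn.mult_spec
  obtain ⟨hmT, hmT0⟩ := hT.mult_spec
  constructor
  · rintro ⟨hTR, -, hTS⟩
    have memS : ∀ n, n ∈ S ↔ n ∈ T ∧ n ≠ ratio T := fun n => by rw [← hTS]; simp
    -- `0 ∈ S = T \ {ratio T}`, which excludes the junk value `ratio T = 0`.
    have hx0 : ratio T ≠ 0 := fun h => ((memS 0).1 hSn.1).2 h.symm
    obtain ⟨hxT, hxd⟩ := ratio_spec_of_ne_zero hx0
    have hne : mult T ≠ ratio T := fun h => hxd (h ▸ dvd_rfl)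
    have hm : mult S = mult T :=
      le_antisymm (mult_le_of_mem ((memS _).2 ⟨hmT, hne⟩) hmT0)
        (mult_le_of_mem ((memS _).1 hmS).1 hmS0)
    have hxS : ratio T ∉ S := fun h => ((memS _).1 h).2 rfl
    have hTeq : T = S ∪ {ratio T} := by
      ext n
      by_cases hn : n = ratio T
      · simp [hn, hxT]
      · simp [memS, hn]
    refine ⟨ratio T, ⟨⟨hxS, fun s hs hs0 => ?_⟩, ?_⟩, ?_, ?_, hTeq, hTeq ▸ hTR⟩
    · exact (memS _).2 ⟨hT.2.1 _ hxT _ ((memS s).1 hs).1, by omega⟩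
    · exact (memS _).2 ⟨by rw [two_mul]; exact hT.2.1 _ hxT _ hxT, by omega⟩
    · have := mult_le_of_mem hxT hx0
      omega
    · -- `ratio S` is not a junk value: adding a large multiple of `mult T` to `ratio T` lands in `S`.
      obtain ⟨N, hN⟩ := hSn.exists_bound
      have hbig : ratio T + mult T * (N + 1) ∈ S :=
        hN _ (by have := Nat.le_mul_of_pos_left (N + 1) (Nat.pos_of_ne_zero hmT0); omega)
      obtain ⟨hr, hrd⟩ := ratio_spec hbig
        (by rw [hm, Nat.dvd_add_left (dvd_mul_right _ _)]; exact hxd)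
      have hle := ratio_le_of_mem ((memS _).1 hr).1 (hm ▸ hrd)
      exact lt_of_le_of_ne hle (((memS _).1 hr).2.symm)
  · rintro ⟨x, ⟨⟨hxS, -⟩, -⟩, hmx, hxr, rfl, hTR⟩
    have hxT : x ∈ S ∪ {x} := Or.inr rfl
    have hm : mult (S ∪ {x}) = mult S := by
      apply le_antisymm (mult_le_of_mem (Or.inl hmS) hmS0)
      rcases hmT with h | h
      · exact mult_le_of_mem h hmT0
      · rw [Set.mem_singleton_iff] at h
        omega
    have hxd : ¬ mult S ∣ x := fun h => hxS (hSn.mem_of_mult_dvd h)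
    have hrx : ratio (S ∪ {x}) = x := by
      apply le_antisymm (ratio_le_of_mem hxT (hm ▸ hxd))
      obtain ⟨h | h, hd⟩ := ratio_spec hxT (hm ▸ hxd)
      · rw [hm] at hd
        exact hxr.le.trans (ratio_le_of_mem h hd)
      · exact (Set.mem_singleton_iff.1 h).ge
    refine ⟨hTR, fun M hM h => hxS (hM.2 S hS (h ▸ hxT)), ?_⟩
    rw [hrx]
    ext n
    by_cases hn : n = x
    · simp [hn, hxS]
    · simp [hn]
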